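/- arXiv:math/0209319 — 4 statements merged into one kernel-verified Lean document; each statement's English description precedes it below -/
import Mathlib

section
/- Let n ≥ 1 and let x, y ∈ ℝⁿ with x ≠ 0 and ⟨x,y⟩ = 0. Let g : ℝⁿ ∖ {0} → ℝⁿ be the map g(x) = x/‖x‖, and let Dg_x denote its Fréchet derivative at x. Then for every ξ ∈ ℝⁿ one has ⟨−‖x‖·y, Dg_x(ξ)⟩ = −⟨y, ξ⟩. -/
/-!
At a nonzero point `x` the derivative of `w ↦ ‖w‖⁻¹ • w` is `‖x‖⁻¹` times the orthogonal projection
onto `xᗮ`. This projection is self-adjoint and fixes every `y` orthogonal to `x`, so pairing the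
derivative with `‖x‖ • y` cancels the factor `‖x‖⁻¹` and leaves `⟪y, ξ⟫`.
-/

section Normalize

open scoped RealInnerProductSpace

variable {F : Type*} [NormedAddCommGroup F] [InnerProductSpace ℝ F] {x : F}

theorem hasStrictFDerivAt_norm (hx : x ≠ 0) :
    HasStrictFDerivAt (‖·‖) (‖x‖⁻¹ • innerSL ℝ x) x := by
  have h_sqrt := (hasStrictFDerivAt_norm_sq x).sqrt (by positivity)
  simp only [Real.sqrt_sq (norm_nonneg _)] at h_sqrt
  exact h_sqrt.congr_fderiv (by module)

theorem hasStrictFDerivAt_normalize (hx : x ≠ 0) :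
    HasStrictFDerivAt NormedSpace.normalize (‖x‖⁻¹ • (ℝ ∙ x)ᗮ.starProjection) x := by
  have h_inv :=
    (hasStrictDerivAt_inv (norm_ne_zero_iff.mpr hx)).comp_hasStrictFDerivAt x
      (hasStrictFDerivAt_norm hx)
  refine (h_inv.smul (hasStrictFDerivAt_id x)).congr_fderiv ?_
  ext ξ
  have h_proj : (ℝ ∙ x)ᗮ.starProjection ξ = ξ - (⟪x, ξ⟫ / ‖x‖ ^ 2) • x := by
    simp only [Submodule.starProjection_orthogonal_val, Submodule.starProjection_singleton,
      RCLike.ofReal_real_eq_id, id_eq]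
  simp only [h_proj, Function.comp_apply, id_eq, add_apply, smul_apply,
    ContinuousLinearMap.id_apply, ContinuousLinearMap.smulRight_apply, coe_innerSL_apply,
    smul_eq_mul]
  module

theorem stmt_3_general {y : F} (hx : x ≠ 0) (hxy : ⟪x, y⟫ = 0) (ξ : F) :
    ⟪-(‖x‖ • y), fderiv ℝ NormedSpace.normalize x ξ⟫ = -⟪y, ξ⟫ := by
  have h_fixed : (ℝ ∙ x)ᗮ.starProjection y = y :=
    Submodule.starProjection_eq_self_iff.mpr
      (Submodule.mem_orthogonal_singleton_iff_inner_right.mpr hxy)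
  calc ⟪-(‖x‖ • y), fderiv ℝ NormedSpace.normalize x ξ⟫
      = -⟪y, (ℝ ∙ x)ᗮ.starProjection ξ⟫ := by
        rw [(hasStrictFDerivAt_normalize hx).hasFDerivAt.fderiv, smul_apply,
          inner_neg_left, real_inner_smul_left, real_inner_smul_right,
          mul_inv_cancel_left₀ (norm_ne_zero_iff.mpr hx)]
    _ = -⟪y, ξ⟫ := by rw [← Submodule.inner_starProjection_left_eq_right, h_fixed]

end Normalize

/-- For `x ≠ 0` with `⟨x,y⟩ = 0`, and `g(x) = x/‖x‖`, one has
`⟨−‖x‖·y, Dg_x(ξ)⟩ = −⟨y, ξ⟩` for every `ξ`. -/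
theorem stmt_3 (n : ℕ) (hn : 1 ≤ n) (x y : EuclideanSpace ℝ (Fin n))
    (hx : x ≠ 0) (hxy : (inner ℝ x y : ℝ) = 0) (ξ : EuclideanSpace ℝ (Fin n)) :
    (inner ℝ (-(‖x‖ • y))
        (fderiv ℝ (fun w : EuclideanSpace ℝ (Fin n) => ‖w‖⁻¹ • w) x ξ) : ℝ)
      = -(inner ℝ y ξ : ℝ) :=
  stmt_3_general hx hxy ξ
end

section
/- Let x₁, x₂, x₃, x₄ be positive real numbers and let λ be a real number with 0 ≤ λ < 5. Then there is no complex number x₅ satisfying both x₅⁵ − λ·x₁x₂x₃x₄·x₅ + (x₁⁵ + x₂⁵ + x₃⁵ + x₄⁵) = 0 and 5x₅⁴ − λ·x₁x₂x₃x₄ = 0; i.e., the polynomial T⁵ − λx₁x₂x₃x₄·T + (x₁⁵+⋯+x₄⁵) ∈ ℂ[T] has no repeated complex root. -/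
/-!
At a repeated root `z` of `T ^ (n + 1) - a * T + b` one has `(n + 1) * z ^ n = a` and
`n * z ^ (n + 1) = b`. When `b = ∑ i, x i ^ (n + 1)` is a sum over `n` nonnegative reals, AM-GM
turns the second equation into `∏ i, x i ≤ ‖z‖ ^ n`; when `a = lam * ∏ i, x i`, the first one then
gives `(n + 1) * ‖z‖ ^ n ≤ ‖lam‖ * ‖z‖ ^ n`. For `‖lam‖ < n + 1` this forces `z = 0`, and so `b = 0`
and `x = 0`.
-/

open Finset

section MeanInequality

variable {ι : Type*} {s : Finset ι} {x : ι → ℝ}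

theorem prod_le_arith_mean_pow_card (hx : ∀ i ∈ s, 0 ≤ x i) :
    ∏ i ∈ s, x i ≤ ((∑ i ∈ s, x i) / #s) ^ #s := by
  rcases s.eq_empty_or_nonempty with rfl | hs
  · simp
  have card_pos : (0 : ℝ) < #s := by exact_mod_cast hs.card_pos
  have amgm : (∏ i ∈ s, x i) ^ (#s : ℝ)⁻¹ ≤ (∑ i ∈ s, x i) / #s := by
    simpa using Real.geom_mean_le_arith_mean s 1 x (by simp) (by simpa using hs) hx
  have mean_nonneg : 0 ≤ (∑ i ∈ s, x i) / #s := div_nonneg (sum_nonneg hx) card_pos.le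
  rwa [Real.rpow_inv_le_iff_of_pos (prod_nonneg hx) mean_nonneg card_pos,
    Real.rpow_natCast] at amgm

theorem prod_le_pow_card_of_sum_pow_le {r : ℝ} {p : ℕ} (hp : p ≠ 0) (hx : ∀ i ∈ s, 0 ≤ x i)
    (hr : 0 ≤ r) (h : ∑ i ∈ s, x i ^ p ≤ #s * r ^ p) : ∏ i ∈ s, x i ≤ r ^ #s := by
  have hxp : ∀ i ∈ s, 0 ≤ x i ^ p := fun i hi ↦ pow_nonneg (hx i hi) p
  refine le_of_pow_le_pow_left₀ hp (by positivity) ?_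
  calc (∏ i ∈ s, x i) ^ p = ∏ i ∈ s, x i ^ p := (prod_pow s p x).symm
    _ ≤ ((∑ i ∈ s, x i ^ p) / #s) ^ #s := prod_le_arith_mean_pow_card hxp
    _ ≤ (r ^ p) ^ #s := by
      have mean_nonneg : 0 ≤ (∑ i ∈ s, x i ^ p) / #s := div_nonneg (sum_nonneg hxp) (by positivity)
      gcongr
      exact div_le_of_le_mul₀ (by positivity) (by positivity) (by rwa [mul_comm])
    _ = (r ^ #s) ^ p := pow_right_comm r p #s

end MeanInequality

theorem natCast_mul_pow_succ_eq_of_repeated_root {R : Type*} [CommRing R] {n : ℕ} {a b z : R}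
    (root : z ^ (n + 1) - a * z + b = 0) (deriv_root : (n + 1) * z ^ n - a = 0) :
    n * z ^ (n + 1) = b := by
  linear_combination z * deriv_root - root

theorem stmt_11_general {ι : Type*} [Fintype ι] {x : ι → ℝ} {lam : ℂ} (hx : ∀ i, 0 ≤ x i)
    (hx_ne : x ≠ 0) (hlam : ‖lam‖ < Fintype.card ι + 1) :
    ¬ ∃ z : ℂ,
      z ^ (Fintype.card ι + 1) - lam * (∏ i, (x i : ℂ)) * z
          + ∑ i, (x i : ℂ) ^ (Fintype.card ι + 1) = 0 ∧
      (Fintype.card ι + 1) * z ^ Fintype.card ι - lam * ∏ i, (x i : ℂ) = 0 := by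
  rintro ⟨z, root, deriv_root⟩
  set n := Fintype.card ι
  have sum_pow_nonneg : 0 ≤ ∑ i, x i ^ (n + 1) := sum_nonneg fun i _ ↦ pow_nonneg (hx i) _
  have norm_sum : n * ‖z‖ ^ (n + 1) = ∑ i, x i ^ (n + 1) := by
    have h : n * z ^ (n + 1) = ((∑ i, x i ^ (n + 1) : ℝ) : ℂ) := by
      exact_mod_cast natCast_mul_pow_succ_eq_of_repeated_root root deriv_root
    simpa [-Complex.ofReal_sum, abs_of_nonneg sum_pow_nonneg] using congrArg norm h
  have norm_prod : (n + 1) * ‖z‖ ^ n = ‖lam‖ * ∏ i, x i := by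
    have norm_succ : ‖(n + 1 : ℂ)‖ = n + 1 := mod_cast Complex.norm_natCast (n + 1)
    simpa [norm_succ, abs_of_nonneg (hx _)] using congrArg norm (sub_eq_zero.mp deriv_root)
  have prod_le : ∏ i, x i ≤ ‖z‖ ^ n :=
    prod_le_pow_card_of_sum_pow_le n.succ_ne_zero (fun i _ ↦ hx i) (norm_nonneg z) norm_sum.ge
  have z_eq_zero : z = 0 := by
    by_contra hz
    have norm_pow_pos : 0 < ‖z‖ ^ n := by positivity
    refine lt_irrefl ((n + 1) * ‖z‖ ^ n) ?_
    calc (n + 1) * ‖z‖ ^ n = ‖lam‖ * ∏ i, x i := norm_prod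
      _ ≤ ‖lam‖ * ‖z‖ ^ n := by gcongr
      _ < (n + 1) * ‖z‖ ^ n := mul_lt_mul_of_pos_right hlam norm_pow_pos
  have sum_eq_zero : ∑ i, x i ^ (n + 1) = 0 := by simp [← norm_sum, z_eq_zero]
  rw [sum_eq_zero_iff_of_nonneg fun i _ ↦ pow_nonneg (hx i) _] at sum_eq_zero
  exact hx_ne (funext fun i ↦ eq_zero_of_pow_eq_zero (sum_eq_zero i (mem_univ i)))

/-- For positive reals `x₁,…,x₄` and `0 ≤ λ < 5`, the polynomial
`T⁵ − λx₁x₂x₃x₄·T + (x₁⁵+⋯+x₄⁵) ∈ ℂ[T]` has no repeated complex root: there is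
no `x₅ ∈ ℂ` at which both it and its derivative vanish. -/
theorem stmt_11 (x₁ x₂ x₃ x₄ lam : ℝ)
    (h₁ : 0 < x₁) (h₂ : 0 < x₂) (h₃ : 0 < x₃) (h₄ : 0 < x₄)
    (hlam0 : 0 ≤ lam) (hlam : lam < 5) :
    ¬ ∃ x₅ : ℂ,
      x₅ ^ 5 - (lam : ℂ) * ((x₁ : ℂ) * x₂ * x₃ * x₄) * x₅
          + ((x₁ : ℂ) ^ 5 + (x₂ : ℂ) ^ 5 + (x₃ : ℂ) ^ 5 + (x₄ : ℂ) ^ 5) = 0 ∧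
      5 * x₅ ^ 4 - (lam : ℂ) * ((x₁ : ℂ) * x₂ * x₃ * x₄) = 0 := by
  have x_nonneg : ∀ i, 0 ≤ ![x₁, x₂, x₃, x₄] i := by
    simp [Fin.forall_fin_succ, h₁.le, h₂.le, h₃.le, h₄.le]
  have x_ne_zero : ![x₁, x₂, x₃, x₄] ≠ 0 := fun h ↦ h₁.ne' (congrFun h 0)
  have norm_lam : ‖(lam : ℂ)‖ < Fintype.card (Fin 4) + 1 := by
    norm_num [abs_of_nonneg hlam0, hlam]
  have four_add_one : (4 : ℂ) + 1 = 5 := by norm_num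
  simpa [Fin.sum_univ_four, Fin.prod_univ_four, four_add_one] using
    stmt_11_general x_nonneg x_ne_zero norm_lam
end

section
/- Let λ be a real number and let x = (x₁,…,x₅) ∈ ℂ⁵ be nonzero. If all five partial derivatives of f_λ(x) = Σ_{i=1}^5 x_i⁵ − λ·∏_{i=1}^5 x_i vanish at x, i.e. 5x_j⁴ = λ·∏_{i≠j} x_i for every j = 1,…,5, then λ = 5. -/
open scoped BigOperators

/-!
Multiplying the `j`-th critical point equation by `x j` makes its right-hand side
`c * ∏ i, x i` independent of `j`. Hence a single vanishing coordinate would force all of them to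
vanish, and multiplying the resulting equations over all `j` and cancelling the nonzero
`∏ i, x i` to the power `N` leaves `a ^ N = c ^ N`, where `N` is the number of variables. In a
linearly ordered ring the injectivity of odd powers then gives `a = c`.
-/

section CriticalEquations

variable {ι M : Type*} [Fintype ι] {n : ℕ} {a c : M} {x : ι → M}

theorem mul_pow_succ_eq_mul_prod_of_mul_pow_eq_mul_prod_erase [DecidableEq ι] [CommMonoid M]
    {j : ι} (h : a * x j ^ n = c * ∏ i ∈ Finset.univ.erase j, x i) :
    a * x j ^ (n + 1) = c * ∏ i, x i := by
  rw [pow_succ, ← mul_assoc, h, mul_assoc, Finset.prod_erase_mul _ _ (Finset.mem_univ j)]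

variable [CommMonoidWithZero M]

theorem prod_ne_zero_of_mul_pow_eq_mul_prod [NoZeroDivisors M] (ha : a ≠ 0) (hx : x ≠ 0)
    (h : ∀ j, a * x j ^ n = c * ∏ i, x i) : ∏ i, x i ≠ 0 := by
  intro hprod
  refine hx (funext fun j => ?_)
  have hj : a * x j ^ n = 0 := by rw [h j, hprod, mul_zero]
  exact eq_zero_of_pow_eq_zero ((mul_eq_zero.mp hj).resolve_left ha)

theorem pow_card_eq_pow_card_of_mul_pow_card_eq_mul_prod [IsCancelMulZero M]
    (hprod : ∏ i, x i ≠ 0) (h : ∀ j, a * x j ^ Fintype.card ι = c * ∏ i, x i) :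
    a ^ Fintype.card ι = c ^ Fintype.card ι := by
  refine mul_right_cancel₀ (pow_ne_zero (Fintype.card ι) hprod) ?_
  calc
    a ^ Fintype.card ι * (∏ i, x i) ^ Fintype.card ι
        = ∏ j, a * x j ^ Fintype.card ι := by
      rw [Finset.prod_mul_distrib, Finset.prod_pow, Finset.prod_const, Finset.card_univ]
    _ = ∏ _j : ι, c * ∏ i, x i := Finset.prod_congr rfl fun j _ => h j
    _ = c ^ Fintype.card ι * (∏ i, x i) ^ Fintype.card ι := by
      rw [Finset.prod_const, Finset.card_univ, mul_pow]

theorem pow_card_eq_pow_card_of_mul_pow_eq_mul_prod_erase [DecidableEq ι] [IsCancelMulZero M]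
    (hn : Fintype.card ι = n + 1) (ha : a ≠ 0) (hx : x ≠ 0)
    (h : ∀ j, a * x j ^ n = c * ∏ i ∈ Finset.univ.erase j, x i) :
    a ^ Fintype.card ι = c ^ Fintype.card ι := by
  have hpow (j : ι) : a * x j ^ Fintype.card ι = c * ∏ i, x i :=
    hn ▸ mul_pow_succ_eq_mul_prod_of_mul_pow_eq_mul_prod_erase (h j)
  exact pow_card_eq_pow_card_of_mul_pow_card_eq_mul_prod
    (prod_ne_zero_of_mul_pow_eq_mul_prod ha hx hpow) hpow

end CriticalEquations

theorem stmt_12_general {ι R A : Type*} [Fintype ι] [DecidableEq ι]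
    [CommRing R] [LinearOrder R] [IsStrictOrderedRing R]
    [CommRing A] [NoZeroDivisors A] [Algebra R A] [FaithfulSMul R A]
    {n : ℕ} (hcard : Fintype.card ι = n + 1) (hn : Even n) {a c : R} (ha : a ≠ 0)
    {x : ι → A} (hx : x ≠ 0)
    (hcrit : ∀ j, algebraMap R A a * x j ^ n =
      algebraMap R A c * ∏ i ∈ Finset.univ.erase j, x i) :
    c = a := by
  have hinj : Function.Injective (algebraMap R A) := FaithfulSMul.algebraMap_injective R A
  have hmap : algebraMap R A a ^ Fintype.card ι = algebraMap R A c ^ Fintype.card ι :=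
    pow_card_eq_pow_card_of_mul_pow_eq_mul_prod_erase hcard
      ((map_ne_zero_iff _ hinj).mpr ha) hx hcrit
  have hpow : a ^ Fintype.card ι = c ^ Fintype.card ι := hinj (by simpa only [map_pow] using hmap)
  have hodd : Odd (Fintype.card ι) := hcard ▸ hn.add_one
  exact hodd.pow_inj.mp hpow.symm

/-- If `λ ∈ ℝ` and some nonzero `x ∈ ℂ⁵` is a critical point of
`f_λ(x) = ∑ xᵢ⁵ − λ∏ xᵢ`, i.e. `5xⱼ⁴ = λ∏_{i≠j} xᵢ` for all `j`, then `λ = 5`. -/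
theorem stmt_12 (lam : ℝ) (x : Fin 5 → ℂ) (hx : x ≠ 0)
    (hcrit : ∀ j, 5 * x j ^ 4 = (lam : ℂ) * ∏ i ∈ Finset.univ.erase j, x i) :
    lam = 5 :=
  stmt_12_general (Fintype.card_fin 5) (by decide : Even 4) (OfNat.ofNat_ne_zero 5) hx
    (by simpa only [map_ofNat, Complex.coe_algebraMap] using hcrit)
end

section
/- Let x = (x₁,…,x₅) ∈ ℂ⁵ be nonzero. Then all five partial derivatives of f₅(x) = Σ_{i=1}^5 x_i⁵ − 5·∏_{i=1}^5 x_i vanish at x (i.e. 5x_j⁴ = 5·∏_{i≠j} x_i for every j) if and only if there exist t ∈ ℂ ∖ {0} and ω₁,…,ω₅ ∈ ℂ with ω_j⁵ = 1 for every j, ∏_{j=1}^5 ω_j = 1, and x_j = t·ω_j for every j. Moreover any such x satisfies f₅(x) = 0. -/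
open scoped BigOperators

/-!
Let `f = ∑ xᵢⁿ - l ∏ xᵢ`, with `n = card ι`, be any member of the Dwork pencil;
Schoen's quintic is the case `n = l = 5`. Multiplying `∂f/∂xⱼ = 0` by `xⱼ` gives
`n xⱼⁿ = l ∏ xᵢ`, whose right-hand side is independent of `j`. Hence one vanishing coordinate
forces all of them to vanish; otherwise the multiplication can be undone, and the ratios
`xⱼ / xₖ` are `n`-th roots of unity, whose product is read off from the same equation.
Summing it over `j` and cancelling `n` gives `f = 0`.
-/

section CriticalPoints

variable {ι M K : Type*} [Fintype ι]

theorem mul_mul_pow_card_sub_one_eq_mul_mul_prod_erase_iff [DecidableEq ι] [CommMonoid M]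
    (a b : M) (x : ι → M) (j : ι) :
    x j * (a * x j ^ (Fintype.card ι - 1)) = x j * (b * ∏ i ∈ Finset.univ.erase j, x i) ↔
      a * x j ^ Fintype.card ι = b * ∏ i, x i := by
  have : Nonempty ι := ⟨j⟩
  rw [mul_left_comm, mul_pow_sub_one Fintype.card_ne_zero, mul_left_comm,
    Finset.mul_prod_erase _ _ (Finset.mem_univ j)]

theorem ne_zero_of_forall_mul_pow_card_eq_mul_prod [CommMonoidWithZero M] [NoZeroDivisors M]
    {a b : M} {x : ι → M} (ha : a ≠ 0) (hx : x ≠ 0)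
    (h : ∀ j, a * x j ^ Fintype.card ι = b * ∏ i, x i) (j : ι) : x j ≠ 0 := by
  intro hj
  have prod_eq_zero : ∏ i, x i = 0 := Finset.prod_eq_zero (Finset.mem_univ j) hj
  have mul_pow_eq_zero (i : ι) : a * x i ^ Fintype.card ι = 0 := by
    rw [h i, prod_eq_zero, mul_zero]
  exact hx (funext fun i ↦ eq_zero_of_pow_eq_zero ((mul_eq_zero_iff_left ha).1 (mul_pow_eq_zero i)))

theorem forall_mul_pow_card_sub_one_eq_mul_prod_erase_iff [DecidableEq ι]
    [CommMonoidWithZero M] [IsCancelMulZero M] {a b : M} {x : ι → M} (ha : a ≠ 0) (hx : x ≠ 0) :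
    (∀ j, a * x j ^ (Fintype.card ι - 1) = b * ∏ i ∈ Finset.univ.erase j, x i) ↔
      ∀ j, a * x j ^ Fintype.card ι = b * ∏ i, x i where
  mp h j := (mul_mul_pow_card_sub_one_eq_mul_mul_prod_erase_iff a b x j).1
    (congrArg (x j * ·) (h j))
  mpr h j := mul_left_cancel₀ (ne_zero_of_forall_mul_pow_card_eq_mul_prod ha hx h j)
    ((mul_mul_pow_card_sub_one_eq_mul_mul_prod_erase_iff a b x j).2 (h j))

theorem forall_mul_pow_card_eq_mul_prod_iff_exists_roots_of_unity [CommGroupWithZero K]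
    {a b : K} {x : ι → K} (ha : a ≠ 0) (hx : x ≠ 0) :
    (∀ j, a * x j ^ Fintype.card ι = b * ∏ i, x i) ↔
      ∃ t : K, t ≠ 0 ∧ ∃ ω : ι → K,
        (∀ j, ω j ^ Fintype.card ι = 1) ∧ b * ∏ j, ω j = a ∧ ∀ j, x j = t * ω j := by
  constructor
  · intro h
    obtain ⟨k, hk⟩ := Function.ne_iff.1 hx
    have pow_eq (j : ι) : x j ^ Fintype.card ι = x k ^ Fintype.card ι :=
      mul_left_cancel₀ ha ((h j).trans (h k).symm)
    have hpow : x k ^ Fintype.card ι ≠ 0 := pow_ne_zero _ hk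
    refine ⟨x k, hk, fun j ↦ x j / x k, fun j ↦ ?_, ?_, fun j ↦ (mul_div_cancel₀ _ hk).symm⟩
    · rw [div_pow, pow_eq, div_self hpow]
    · rw [Finset.prod_div_distrib, Finset.prod_const, Finset.card_univ, ← mul_div_assoc, ← h k,
        mul_div_cancel_right₀ _ hpow]
  · rintro ⟨t, -, ω, hω, hprod, hxt⟩ j
    calc a * x j ^ Fintype.card ι
        = (b * ∏ i, ω i) * t ^ Fintype.card ι := by rw [hxt, mul_pow, hω, mul_one, hprod]
      _ = b * ∏ i, t * ω i := by
        rw [Finset.prod_mul_distrib, Finset.prod_const, Finset.card_univ, mul_assoc,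
          mul_comm (∏ i, ω i)]
      _ = b * ∏ i, x i := by simp only [hxt]

theorem sum_eq_of_forall_card_mul_eq [Semiring K] [IsCancelMulZero K] {y : ι → K} {c : K}
    (hcard : (Fintype.card ι : K) ≠ 0) (h : ∀ j, (Fintype.card ι : K) * y j = c) :
    ∑ j, y j = c := by
  refine mul_left_cancel₀ hcard ?_
  rw [Finset.mul_sum, Finset.sum_congr rfl fun j _ ↦ h j, Finset.sum_const, Finset.card_univ,
    nsmul_eq_mul]

theorem stmt_13_general [DecidableEq ι] [Field K] (hcard : (Fintype.card ι : K) ≠ 0) (l : K)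
    (x : ι → K) (hx : x ≠ 0) :
    ((∀ j, (Fintype.card ι : K) * x j ^ (Fintype.card ι - 1) =
        l * ∏ i ∈ Finset.univ.erase j, x i) ↔
      ∃ t : K, t ≠ 0 ∧ ∃ ω : ι → K,
        (∀ j, ω j ^ Fintype.card ι = 1) ∧ l * ∏ j, ω j = Fintype.card ι ∧
          ∀ j, x j = t * ω j) ∧
    ((∀ j, (Fintype.card ι : K) * x j ^ (Fintype.card ι - 1) =
        l * ∏ i ∈ Finset.univ.erase j, x i) →
      (∑ j, x j ^ Fintype.card ι) - l * ∏ j, x j = 0) := by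
  rw [forall_mul_pow_card_sub_one_eq_mul_prod_erase_iff hcard hx]
  exact ⟨forall_mul_pow_card_eq_mul_prod_iff_exists_roots_of_unity hcard hx,
    fun h ↦ sub_eq_zero.2 (sum_eq_of_forall_card_mul_eq hcard h)⟩

end CriticalPoints

/-- A nonzero `x ∈ ℂ⁵` is a critical point of `f₅(x) = ∑ xᵢ⁵ − 5∏ xᵢ`
(i.e. `5xⱼ⁴ = 5∏_{i≠j} xᵢ` for all `j`) iff `x = t·ω` for some `t ≠ 0` and fifth
roots of unity `ω₁,…,ω₅` with `∏ ωⱼ = 1`; moreover any such `x` satisfies `f₅(x) = 0`. -/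
theorem stmt_13 (x : Fin 5 → ℂ) (hx : x ≠ 0) :
    ((∀ j, 5 * x j ^ 4 = 5 * ∏ i ∈ Finset.univ.erase j, x i) ↔
      ∃ t : ℂ, t ≠ 0 ∧ ∃ ω : Fin 5 → ℂ,
        (∀ j, ω j ^ 5 = 1) ∧ (∏ j, ω j = 1) ∧ ∀ j, x j = t * ω j) ∧
    ((∀ j, 5 * x j ^ 4 = 5 * ∏ i ∈ Finset.univ.erase j, x i) →
      (∑ j, x j ^ 5) - 5 * ∏ j, x j = 0) := by
  simpa only [Fintype.card_fin, Nat.reduceSub, Nat.cast_ofNat,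
    mul_eq_left₀ (OfNat.ofNat_ne_zero 5 : (5 : ℂ) ≠ 0)] using
    stmt_13_general (by norm_num) 5 x hx
end
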